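/- Let P : GF(2)^16 -> GF(2) be the polynomial in variables (a,b,c,d,e,f,g,h,y,z,M,N,O,S,Q,R) given by P = bc+cd+dy+yz+zM+MN+eN+ef+fg+gh+hO+OS+SQ+QR+aR+ab+bg+ch+dO+yS+zQ+MR+aN+be+cf+dg+hy+zO+MS+NQ+eR+af. Then the number of x in GF(2)^16 with P(x)=0 is exactly 36864, and the number with P(x)=1 is exactly 28672. -/

import Mathlib

/-- The 16-variable invariant, with (a,b,c,d,e,f,g,h,y,z,M,N,O,S,Q,R)
= (x 0, x 1, ..., x 15). -/
def P16 (x : Fin 16 → ZMod 2) : ZMod 2 :=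
  x 1 * x 2 + x 2 * x 3 + x 3 * x 8 + x 8 * x 9 + x 9 * x 10 + x 10 * x 11 +
  x 4 * x 11 + x 4 * x 5 + x 5 * x 6 + x 6 * x 7 + x 7 * x 12 + x 12 * x 13 +
  x 13 * x 14 + x 14 * x 15 + x 0 * x 15 + x 0 * x 1 + x 1 * x 6 + x 2 * x 7 +
  x 3 * x 12 + x 8 * x 13 + x 9 * x 14 + x 10 * x 15 + x 0 * x 11 + x 1 * x 4 +
  x 2 * x 5 + x 3 * x 6 + x 7 * x 8 + x 9 * x 12 + x 10 * x 13 + x 11 * x 14 +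
  x 4 * x 15 + x 0 * x 5

/-!
The quadratic form has rank `6` and hyperbolic type: in the letters of the paper,
`P = (a+c+e+g)(b+f+N+R) + (c+g+y+O)(d+h+N+R) + (y+M+O+Q)(z+N+S+R)`,
a sum of three products of independent linear forms. Independence makes the six forms
equidistributed on `GF(2)^6`, so `P` takes each value in the same proportion as the pairing
`(u, v) ↦ u ⬝ᵥ v` on `GF(2)^3 × GF(2)^3`. For fixed `u ≠ 0` that pairing is balanced in `v`,
and all of the bias comes from `u = 0`.
-/

theorem card_subtype_comp_eq_mul_card_ker {G H : Type*} [AddGroup G] [AddGroup H] {f : G →+ H}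
    (hf : Function.Surjective f) (p : H → Prop) :
    Nat.card {x // p (f x)} = Nat.card {y // p y} * Nat.card f.ker := by
  let e : {x // p (f x)} ≃ {y // p y} × f.ker :=
    (Equiv.sigmaSubtypeFiberEquivSubtype f fun _ => Iff.rfl).symm.trans <|
      (Equiv.sigmaCongrRight fun y : {y // p y} => f.fiberEquivKerOfSurjective hf y).trans <|
        Equiv.sigmaEquivProd _ _
  rw [Nat.card_congr e, Nat.card_prod]

theorem card_subtype_comp_mul_card {G H : Type*} [AddGroup G] [AddGroup H] {f : G →+ H}
    (hf : Function.Surjective f) (p : H → Prop) :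
    Nat.card {x // p (f x)} * Nat.card H = Nat.card G * Nat.card {y // p y} := by
  have card_domain : Nat.card G = Nat.card H * Nat.card f.ker := by
    simpa only [Nat.card_congr (Equiv.subtypeUnivEquiv fun _ => trivial)] using
      card_subtype_comp_eq_mul_card_ker hf fun _ => True
  rw [card_subtype_comp_eq_mul_card_ker hf p, card_domain]
  ring

section Pairing

variable {F M N : Type*} [Field F] [AddCommGroup M] [Module F M] [AddCommGroup N] [Module F N]

theorem card_mul_card_linearForm_eq {φ : N →ₗ[F] F} (hφ : φ ≠ 0) (c : F) :
    Nat.card F * Nat.card {v // φ v = c} = Nat.card N := by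
  have h := card_subtype_comp_mul_card (f := φ.toAddMonoidHom) (LinearMap.surjective hφ) (· = c)
  rwa [Nat.card_unique (α := {y // y = c}), mul_one, mul_comm] at h

theorem card_mul_card_pairing_eq [Finite M] [Finite N] [DecidableEq F] {B : M →ₗ[F] N →ₗ[F] F}
    (hB : B.SeparatingLeft) (c : F) :
    Nat.card F * Nat.card {p : M × N // B p.1 p.2 = c} =
      (Nat.card M - 1) * Nat.card N + if c = 0 then Nat.card F * Nat.card N else 0 := by
  classical
  have := Fintype.ofFinite M
  have fiber_zero : Nat.card F * Nat.card {v // B 0 v = c} =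
      if c = 0 then Nat.card F * Nat.card N else 0 := by
    split_ifs with hc
    · simp [hc]
    · simp [Ne.symm hc]
  have fiber_ne_zero (u : M) (hu : u ≠ 0) : Nat.card F * Nat.card {v // B u v = c} = Nat.card N :=
    card_mul_card_linearForm_eq (fun h => hu (hB u fun v => by rw [h, LinearMap.zero_apply])) c
  calc Nat.card F * Nat.card {p : M × N // B p.1 p.2 = c}
      = ∑ u, Nat.card F * Nat.card {v // B u v = c} := by
        rw [Nat.card_congr (Equiv.subtypeProdEquivSigmaSubtype fun u v => B u v = c),
          Nat.card_sigma, Finset.mul_sum]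
    _ = (∑ u ∈ Finset.univ.erase 0, Nat.card F * Nat.card {v // B u v = c}) +
          Nat.card F * Nat.card {v // B 0 v = c} :=
        (Finset.sum_erase_add _ _ (Finset.mem_univ 0)).symm
    _ = (Nat.card M - 1) * Nat.card N + if c = 0 then Nat.card F * Nat.card N else 0 := by
        rw [fiber_zero,
          Finset.sum_congr rfl fun u hu => fiber_ne_zero u (Finset.ne_of_mem_erase hu),
          Finset.sum_const, Finset.card_erase_of_mem (Finset.mem_univ 0), Finset.card_univ,
          Nat.card_eq_fintype_card (α := M), smul_eq_mul]

end Pairing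

theorem separatingLeft_dotProductBilin (R n : Type*) [CommSemiring R] [Fintype n] :
    (dotProductBilin R R : (n → R) →ₗ[R] (n → R) →ₗ[R] R).SeparatingLeft :=
  dotProduct_eq_zero

theorem card_mul_card_dotProduct_eq {F n : Type*} [Field F] [Finite F] [DecidableEq F] [Fintype n]
    (c : F) :
    Nat.card F * Nat.card {p : (n → F) × (n → F) // p.1 ⬝ᵥ p.2 = c} =
      (Nat.card F ^ Fintype.card n - 1) * Nat.card F ^ Fintype.card n +
        if c = 0 then Nat.card F ^ (Fintype.card n + 1) else 0 := by
  simpa only [dotProductBilin_apply_apply, Nat.card_fun, Nat.card_eq_fintype_card (α := n),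
    ← pow_succ'] using
    card_mul_card_pairing_eq (separatingLeft_dotProductBilin F n) c

/-- Hyperbolic coordinates for `P16`: the left and right factors of its decomposition into three
products of linear forms, as a pair of vectors whose dot product is `P16`. -/
def hyperbolicCoords : (Fin 16 → ZMod 2) →+ (Fin 3 → ZMod 2) × (Fin 3 → ZMod 2) where
  toFun x :=
    (![x 0 + x 2 + x 4 + x 6, x 2 + x 6 + x 8 + x 12, x 8 + x 10 + x 12 + x 14],
      ![x 1 + x 5 + x 11 + x 15, x 3 + x 7 + x 11 + x 15, x 9 + x 11 + x 13 + x 15])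
  map_zero' := by decide
  map_add' x y := by
    simp only [Pi.add_apply, Prod.mk_add_mk, Matrix.vec3_add, add_add_add_comm]

theorem hyperbolicCoords_surjective : Function.Surjective hyperbolicCoords := by
  rintro ⟨u, v⟩
  refine ⟨![u 0 - u 1, v 0, u 1, v 1, 0, 0, 0, 0, 0, v 2, u 2, 0, 0, 0, 0, 0], ?_⟩
  ext i <;> fin_cases i <;> simp [hyperbolicCoords]

theorem P16_eq_dotProduct (x : Fin 16 → ZMod 2) :
    P16 x = (hyperbolicCoords x).1 ⬝ᵥ (hyperbolicCoords x).2 := by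
  simp only [P16, hyperbolicCoords, AddMonoidHom.coe_mk, ZeroHom.coe_mk, Matrix.vec3_dotProduct']
  grind

theorem card_P16_eq (c : ZMod 2) :
    Nat.card {x // P16 x = c} = 28672 + if c = 0 then 8192 else 0 := by
  have equidistribution := card_subtype_comp_mul_card hyperbolicCoords_surjective
    fun p => p.1 ⬝ᵥ p.2 = c
  have pairing_count := card_mul_card_dotProduct_eq (n := Fin 3) c
  simp only [← P16_eq_dotProduct, Nat.card_prod, Nat.card_fun, Nat.card_zmod, Nat.card_fin]
    at equidistribution
  simp only [Nat.card_zmod, Fintype.card_fin] at pairing_count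
  split_ifs at pairing_count ⊢ <;> omega

theorem stmt_16 :
    Nat.card {x : Fin 16 → ZMod 2 // P16 x = 0} = 36864 ∧
    Nat.card {x : Fin 16 → ZMod 2 // P16 x = 1} = 28672 := by
  constructor <;> rw [card_P16_eq] <;> rfl
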